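/- Let M > M₁(Ω₁) and let u^ε be the strictly k-convex solution of problem (2.1). Then there is a constant C > 0, depending on n, k, Ω₁ and M but independent of ε, such that for all indices 1 ≤ i < j ≤ n the angular derivative satisfies |x_i ∂_j u^ε(x) − x_j ∂_i u^ε(x)| ≤ C for every x ∈ Ω̄^ε. -/

import Mathlib

open Set Metric Filter Topology Bornology
open scoped RealInnerProductSpace

noncomputable section

/-- Euclidean `n`-space. -/
abbrev Euc (n : ℕ) := EuclideanSpace ℝ (Fin n)

/-- The `k`-th elementary symmetric polynomial of a vector `lam ∈ ℝⁿ`. -/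
def esymmVec {n : ℕ} (k : ℕ) (lam : Fin n → ℝ) : ℝ :=
  ∑ S ∈ Finset.powersetCard k (Finset.univ : Finset (Fin n)), ∏ i ∈ S, lam i

/-- `σ_k(A)`: the `k`-th elementary symmetric polynomial of the eigenvalues of a
symmetric matrix `A` (junk value `0` if `A` is not symmetric). -/
noncomputable def sigmaMat {n : ℕ} (k : ℕ) (A : Matrix (Fin n) (Fin n) ℝ) : ℝ := by
  classical exact if h : A.IsHermitian then esymmVec k h.eigenvalues else 0

/-- The eigenvalues of the symmetric matrix `A` lie in the Gårding cone
`Γ_k = {λ : σ_j(λ) > 0, j = 1, …, k}`. -/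
def InGardingCone {n : ℕ} (k : ℕ) (A : Matrix (Fin n) (Fin n) ℝ) : Prop :=
  ∃ h : A.IsHermitian, ∀ j : ℕ, 1 ≤ j → j ≤ k → 0 < esymmVec j h.eigenvalues

/-- The Hessian matrix of `u` at `x`, with derivatives taken within the set `s`. -/
noncomputable def hessianWithin {n : ℕ} (u : Euc n → ℝ) (s : Set (Euc n)) (x : Euc n) :
    Matrix (Fin n) (Fin n) ℝ :=
  fun i j => iteratedFDerivWithin ℝ 2 u s x
    ![EuclideanSpace.single i (1:ℝ), EuclideanSpace.single j (1:ℝ)]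

/-- The Hessian matrix `D²u(x)` of `u` at `x`. -/
noncomputable def hessian {n : ℕ} (u : Euc n → ℝ) (x : Euc n) : Matrix (Fin n) (Fin n) ℝ :=
  fun i j => iteratedFDeriv ℝ 2 u x
    ![EuclideanSpace.single i (1:ℝ), EuclideanSpace.single j (1:ℝ)]

/-- Operator norm of the Hessian matrix of `u` at `x` (derivatives within `s`). -/
noncomputable def hessOpNormWithin {n : ℕ} (u : Euc n → ℝ) (s : Set (Euc n)) (x : Euc n) : ℝ :=
  ‖Matrix.toEuclideanCLM (𝕜 := ℝ) (hessianWithin u s x)‖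

/-- A set has smooth boundary: it is the sublevel set of a smooth defining function
with nonvanishing differential on the boundary. -/
def HasSmoothBoundary {n : ℕ} (Ω : Set (Euc n)) : Prop :=
  ∃ ρ : Euc n → ℝ, ContDiff ℝ (⊤ : ℕ∞) ρ ∧ Ω = {x | ρ x < 0} ∧
    ∀ x ∈ frontier Ω, fderiv ℝ ρ x ≠ 0

/-- `c_{n,k} = (C(n,k))^{1/k}` where `C(n,k)` is the binomial coefficient. -/
noncomputable def cnk (n k : ℕ) : ℝ := (n.choose k : ℝ) ^ ((1:ℝ)/(k:ℝ))

/-- The radially symmetric subsolution `|x - x₀|²/(2c_{n,k}) − ε²/(2c_{n,k}) − M`. -/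
noncomputable def underSol {n : ℕ} (k : ℕ) (x₀ : Euc n) (ε M : ℝ) (x : Euc n) : ℝ :=
  ‖x - x₀‖^2 / (2 * cnk n k) - ε^2 / (2 * cnk n k) - M

/-- The closed ring `Ω̄^ε = closure (Ω₁ \ B̄_ε(x₀))`. -/
def ringSet {n : ℕ} (Ω₁ : Set (Euc n)) (x₀ : Euc n) (ε : ℝ) : Set (Euc n) :=
  closure (Ω₁ \ closedBall x₀ ε)

/-- `u` is a strictly `k`-convex solution of problem (2.1):
`σ_k(D²u) = 1` in `Ω^ε = Ω₁ \ B̄_ε(x₀)`, `u = 0` on `∂Ω₁`, `u = −M` on `∂B_ε(x₀)`,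
with `u ∈ C²(Ω̄^ε)`. -/
def IsSol {n : ℕ} (k : ℕ) (Ω₁ : Set (Euc n)) (x₀ : Euc n) (ε M : ℝ) (u : Euc n → ℝ) : Prop :=
  ContDiffOn ℝ 2 u (ringSet Ω₁ x₀ ε) ∧
  (∀ x ∈ Ω₁ \ closedBall x₀ ε,
      InGardingCone k (hessianWithin u (ringSet Ω₁ x₀ ε) x) ∧
      sigmaMat k (hessianWithin u (ringSet Ω₁ x₀ ε) x) = 1) ∧
  (∀ x ∈ frontier Ω₁, u x = 0) ∧
  (∀ x ∈ sphere x₀ ε, u x = -M)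

/-- `ψ` is a strictly `k`-convex solution of problem (2.2):
`σ_k(D²ψ) = 1` in `Ω₁`, `ψ = 0` on `∂Ω₁`, with `ψ ∈ C^∞(Ω̄₁)`. -/
def IsSol22 {n : ℕ} (k : ℕ) (Ω₁ : Set (Euc n)) (ψ : Euc n → ℝ) : Prop :=
  ContDiffOn ℝ (⊤ : ℕ∞) ψ (closure Ω₁) ∧
  (∀ x ∈ Ω₁, InGardingCone k (hessianWithin ψ (closure Ω₁) x) ∧
      sigmaMat k (hessianWithin ψ (closure Ω₁) x) = 1) ∧
  (∀ x ∈ frontier Ω₁, ψ x = 0)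

/-- `u` is a strictly `k`-convex solution of the Dirichlet problem on the convex ring
`Ω = Ω₁ \ Ω̄₂`: `σ_k(D²u) = 1` in `Ω`, `u = 0` on `∂Ω₁`, `u = −M` on `∂Ω₂`,
with `u ∈ C²(Ω̄)`. -/
def IsSolRing {n : ℕ} (k : ℕ) (Ω₁ Ω₂ : Set (Euc n)) (M : ℝ) (u : Euc n → ℝ) : Prop :=
  ContDiffOn ℝ 2 u (closure (Ω₁ \ closure Ω₂)) ∧
  (∀ x ∈ Ω₁ \ closure Ω₂,
      InGardingCone k (hessianWithin u (closure (Ω₁ \ closure Ω₂)) x) ∧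
      sigmaMat k (hessianWithin u (closure (Ω₁ \ closure Ω₂)) x) = 1) ∧
  (∀ x ∈ frontier Ω₁, u x = 0) ∧
  (∀ x ∈ frontier Ω₂, u x = -M)

/-- The extension `ũ` of `u`, equal to `−M` on the closed ball `B̄_ε(x₀)`. -/
noncomputable def extendBy {n : ℕ} (u : Euc n → ℝ) (x₀ : Euc n) (ε M : ℝ) (x : Euc n) : ℝ := by
  classical exact if x ∈ closedBall x₀ ε then -M else u x

/-- The extension `ũ` of `u`, equal to `−M` on the set `Ω₂`. -/
noncomputable def extendOn {n : ℕ} (u : Euc n → ℝ) (Ω₂ : Set (Euc n)) (M : ℝ) (x : Euc n) : ℝ := by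
  classical exact if x ∈ Ω₂ then -M else u x

/-- The quadratic polynomial with Hessian `A`, linear part `b` and constant term `c`. -/
noncomputable def quadPoly {n : ℕ} (A : Matrix (Fin n) (Fin n) ℝ) (b : Euc n) (c : ℝ)
    (x : Euc n) : ℝ :=
  (∑ i, ∑ j, A i j * x i * x j) / 2 + ⟪b, x⟫ + c

/-!
For a linear isometry `R`, the function `u ∘ R` solves the same equation `σ_k(D²u) = 1` as `u`, so
by the comparison principle `|u - u ∘ R|` on `Ω^ε ∩ R⁻¹ Ω^ε` is bounded by its values on the
boundary. There it vanishes on the rotation-invariant sphere `∂B_ε`, and near `∂Ω₁` it is controlled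
by a barrier: for a large multiple `K` chosen from `ψ < 0` on `B̄_{ε₀}`, one has `K ψ ≤ u ≤ 0` with
equality on `∂Ω₁`, so `|u(y)| ≤ L |y - z|` for `z ∈ ∂Ω₁` with `L` independent of `ε`. Applying this
to the rotations `R = exp (t A)` and differentiating at `t = 0` bounds `Du(x)(A x)`.

The comparison principle itself only needs that `σ_k` is strictly increasing on the Gårding cone
(from Newton's inequalities) and that larger quadratic forms have larger ordered eigenvalues, so
that a perturbation `K u - v + d |x|²` of the difference of two solutions has no interior maximum.
-/

section ElementarySymmetric

open Polynomial

theorem esymm_cons_succ {R : Type*} [CommSemiring R] (a : R) (s : Multiset R) (k : ℕ) :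
    (a ::ₘ s).esymm (k + 1) = s.esymm (k + 1) + a * s.esymm k := by
  simp [Multiset.esymm, Multiset.powersetCard_cons, Multiset.sum_map_mul_left]

theorem splits_derivative {p : ℝ[X]} (hp : p.Splits) : (derivative p).Splits := by
  refine splits_iff_card_roots.2 (le_antisymm (card_roots' _) ?_)
  have rolle := card_roots_le_derivative p
  rw [splits_iff_card_roots.1 hp] at rolle
  exact (natDegree_derivative_le p).trans (Nat.sub_le_of_le_add rolle)

theorem splits_iterate_derivative {p : ℝ[X]} (hp : p.Splits) (m : ℕ) :
    (derivative^[m] p).Splits :=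
  Function.Iterate.rec Splits hp (fun _ => splits_derivative) m

section Laguerre

variable {𝕜 : Type*} [Field 𝕜] [LinearOrder 𝕜] [IsStrictOrderedRing 𝕜]

theorem eval_prod_X_sub_C_mul_eval_derivative_derivative_le_sq (s : Multiset 𝕜) (x : 𝕜) :
    (s.map (X - C ·)).prod.eval x * (derivative (derivative (s.map (X - C ·)).prod)).eval x ≤
      ((derivative (s.map (X - C ·)).prod).eval x) ^ 2 := by
  induction s using Multiset.induction with
  | empty => simp
  | cons a s ih =>
    set q := (s.map (X - C ·)).prod
    simp only [Multiset.map_cons, Multiset.prod_cons, derivative_mul, derivative_add,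
      derivative_X_sub_C, one_mul, eval_add, eval_mul, eval_sub, eval_X, eval_C]
    linear_combination (x - a) ^ 2 * ih + sq_nonneg (q.eval x)

theorem eval_mul_eval_derivative_derivative_le_sq {p : 𝕜[X]} (hp : p.Splits) (x : 𝕜) :
    p.eval x * (derivative (derivative p)).eval x ≤ ((derivative p).eval x) ^ 2 := by
  rw [hp.eq_prod_roots]
  simp only [derivative_C_mul, eval_mul, eval_C]
  linear_combination p.leadingCoeff ^ 2 *
    eval_prod_X_sub_C_mul_eval_derivative_derivative_le_sq p.roots x

end Laguerre

theorem eval_zero_iterate_derivative {R : Type*} [CommSemiring R] (p : R[X]) (m : ℕ) :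
    (derivative^[m] p).eval 0 = m.factorial * p.coeff m := by
  rw [← coeff_zero_eq_eval_zero, coeff_iterate_derivative]
  simp [Nat.descFactorial_self]

theorem coeff_mul_coeff_add_two_le {p : ℝ[X]} (hp : p.Splits) (m : ℕ) :
    (m + 2) * (p.coeff m * p.coeff (m + 2)) ≤ (m + 1) * p.coeff (m + 1) ^ 2 := by
  have laguerre := eval_mul_eval_derivative_derivative_le_sq (splits_iterate_derivative hp m) 0
  simp only [← Function.iterate_succ_apply' derivative, eval_zero_iterate_derivative,
    Nat.factorial_succ, Nat.cast_mul, Nat.cast_succ] at laguerre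
  have scale_pos : (0 : ℝ) < m.factorial ^ 2 * (m + 1) := by positivity
  refine le_of_mul_le_mul_left ?_ scale_pos
  linear_combination laguerre

theorem esymm_mul_esymm_add_two_le_sq (s : Multiset ℝ) (j : ℕ) :
    s.esymm j * s.esymm (j + 2) ≤ s.esymm (j + 1) ^ 2 := by
  rcases lt_or_ge s.card (j + 2) with hs | hs
  · rw [Multiset.esymm, Multiset.esymm, Multiset.powersetCard_eq_empty (j + 2) hs]
    simp [sq_nonneg]
  obtain ⟨m, hm⟩ := Nat.exists_eq_add_of_le' hs
  have splits : (s.map fun r => X + C r).prod.Splits :=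
    Splits.multisetProd (by simp [Splits.X_add_C])
  have newton := coeff_mul_coeff_add_two_le splits m
  rw [Multiset.prod_X_add_C_coeff s (by lia), Multiset.prod_X_add_C_coeff s (by lia),
    Multiset.prod_X_add_C_coeff s (by lia), show s.card - m = j + 2 by lia,
    show s.card - (m + 1) = j + 1 by lia, show s.card - (m + 2) = j by lia] at newton
  have weight_le : ((m + 1) * s.esymm (j + 1) ^ 2 : ℝ) ≤ (m + 2) * s.esymm (j + 1) ^ 2 := by
    gcongr
    norm_num
  refine le_of_mul_le_mul_left ?_ (by positivity : (0 : ℝ) < m + 2)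
  linear_combination newton + weight_le

/-- The Gårding cone `Γ_k`, for the multiset `s` of the entries of a vector. The condition at
`j = 0` always holds, since the empty product is `1`. -/
def IsGarding (k : ℕ) (s : Multiset ℝ) : Prop :=
  ∀ j ≤ k, 0 < s.esymm j

namespace IsGarding

variable {k : ℕ} {s t : Multiset ℝ} {a b : ℝ}

theorem of_cons (h : IsGarding (k + 1) (a ::ₘ s)) : IsGarding k s := by
  intro j
  induction j with
  | zero => simp [Multiset.esymm]
  | succ j ih =>
    intro hj
    have esymm_pos := ih (by lia)
    have cons_pos := h (j + 1) (by lia)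
    have cons_pos' := h (j + 2) (by lia)
    rw [esymm_cons_succ] at cons_pos cons_pos'
    have newton := esymm_mul_esymm_add_two_le_sq s j
    -- If `σ_{j+1}(s) ≤ 0`, positivity of the two sums forces `σ_j(s) σ_{j+2}(s) > σ_{j+1}(s)²`.
    by_contra! nonpos
    linarith [mul_nonpos_of_nonneg_of_nonpos cons_pos.le nonpos, mul_pos esymm_pos cons_pos',
      mul_comm a (s.esymm j * s.esymm (j + 1))]

theorem esymm_cons_lt_cons (h : IsGarding (k + 1) (a ::ₘ s)) (hab : a < b) :
    (a ::ₘ s).esymm (k + 1) < (b ::ₘ s).esymm (k + 1) := by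
  rw [esymm_cons_succ, esymm_cons_succ]
  gcongr
  exact h.of_cons k le_rfl

theorem esymm_cons_le_cons (h : IsGarding k (a ::ₘ s)) (hab : a ≤ b) {j : ℕ} (hj : j ≤ k) :
    (a ::ₘ s).esymm j ≤ (b ::ₘ s).esymm j := by
  cases j with
  | zero => simp [Multiset.esymm]
  | succ j =>
    rw [esymm_cons_succ, esymm_cons_succ]
    gcongr
    exact of_cons (fun i hi => h i (hi.trans hj)) j le_rfl |>.le

theorem esymm_add_le (hst : Multiset.Rel (· ≤ ·) s t) {c : Multiset ℝ} (h : IsGarding k (c + s))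
    {j : ℕ} (hj : j ≤ k) : (c + s).esymm j ≤ (c + t).esymm j := by
  induction hst generalizing c with
  | zero => rfl
  | @cons a b s t hab _ ih =>
    rw [Multiset.add_cons] at h
    have raise_head : ∀ i ≤ k, (a ::ₘ (c + s)).esymm i ≤ (b ::ₘ (c + s)).esymm i :=
      fun i hi => h.esymm_cons_le_cons hab hi
    rw [Multiset.add_cons, Multiset.add_cons, ← Multiset.cons_add b c t]
    refine (raise_head j hj).trans ?_
    rw [← Multiset.cons_add]
    refine ih fun i hi => ?_
    rw [Multiset.cons_add]
    exact (h i hi).trans_le (raise_head i hi)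

theorem esymm_cons_lt (h : IsGarding (k + 1) (a ::ₘ s)) (hab : a < b)
    (hst : Multiset.Rel (· ≤ ·) s t) : (a ::ₘ s).esymm (k + 1) < (b ::ₘ t).esymm (k + 1) := by
  have raised : IsGarding (k + 1) (b ::ₘ s) :=
    fun i hi => (h i hi).trans_le (h.esymm_cons_le_cons hab.le hi)
  rw [← Multiset.singleton_add b s] at raised
  refine (h.esymm_cons_lt_cons hab).trans_le ?_
  simpa only [Multiset.singleton_add] using raised.esymm_add_le hst le_rfl

theorem map_mul (h : IsGarding k s) {c : ℝ} (hc : 0 < c) : IsGarding k (s.map (c * ·)) := by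
  intro j hj
  rw [show (c * · : ℝ → ℝ) = (c • ·) from rfl, ← Multiset.pow_smul_esymm]
  exact mul_pos (pow_pos hc j) (h j hj)

end IsGarding

theorem esymmVec_eq_esymm {n : ℕ} (k : ℕ) (l : Fin n → ℝ) :
    esymmVec k l = (Finset.univ.val.map l).esymm k :=
  (Finset.esymm_map_val l Finset.univ k).symm

theorem isGarding_map_univ {n k : ℕ} {l : Fin n → ℝ}
    (hl : ∀ j : ℕ, 1 ≤ j → j ≤ k → 0 < esymmVec j l) : IsGarding k (Finset.univ.val.map l) := by
  intro j hj
  cases j with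
  | zero => simp [Multiset.esymm]
  | succ j => exact esymmVec_eq_esymm (j + 1) l ▸ hl (j + 1) j.succ_pos hj

theorem esymmVec_lt_esymmVec {n k : ℕ} (hk : 1 ≤ k) {K : ℝ} (hK : 1 ≤ K) {l m : Fin n → ℝ}
    (hl : ∀ j : ℕ, 1 ≤ j → j ≤ k → 0 < esymmVec j l) (hlm : ∀ i, K * l i < m i) :
    esymmVec k l < esymmVec k m := by
  obtain ⟨S, hS, -⟩ := Finset.exists_ne_zero_of_sum_ne_zero (hl k hk le_rfl).ne'
  obtain ⟨i, -⟩ := Finset.card_pos.1 (hk.trans_eq (Finset.mem_powersetCard.1 hS).2.symm)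
  obtain ⟨k, rfl⟩ := Nat.exists_eq_add_of_le' hk
  have hK₀ : 0 < K := one_pos.trans_le hK
  have split_i : ∀ f : Fin n → ℝ, Finset.univ.val.map f =
      f i ::ₘ (Finset.univ.val.erase i).map f := fun f => by
    rw [← Multiset.map_cons, Multiset.cons_erase (Finset.mem_univ_val i)]
  have scaled := (isGarding_map_univ hl).map_mul hK₀
  rw [Multiset.map_map, split_i] at scaled
  calc esymmVec (k + 1) l ≤ K ^ (k + 1) * esymmVec (k + 1) l :=
        le_mul_of_one_le_left (hl _ hk le_rfl).le (one_le_pow₀ hK)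
    _ = (Finset.univ.val.map ((K * ·) ∘ l)).esymm (k + 1) := by
        rw [esymmVec_eq_esymm, ← smul_eq_mul, Multiset.pow_smul_esymm, Multiset.map_map]
        rfl
    _ < esymmVec (k + 1) m := by
        rw [esymmVec_eq_esymm, split_i, split_i m]
        exact scaled.esymm_cons_lt (hlm i)
          (Multiset.rel_map.2 (Multiset.rel_refl_of_refl_on fun j _ => (hlm j).le))

end ElementarySymmetric

section CourantFischer

variable {E : Type*} [NormedAddCommGroup E] [InnerProductSpace ℝ E] [FiniteDimensional ℝ E]
  {N : ℕ} {A B : E →ₗ[ℝ] E}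

theorem inner_apply_eq_sum_eigenvalues (hA : A.IsSymmetric) (hN : Module.finrank ℝ E = N) (w : E) :
    ⟪w, A w⟫ = ∑ j, hA.eigenvalues hN j * ⟪hA.eigenvectorBasis hN j, w⟫ ^ 2 := by
  rw [← (hA.eigenvectorBasis hN).sum_inner_mul_inner]
  refine Finset.sum_congr rfl fun j _ => ?_
  rw [← hA, hA.apply_eigenvectorBasis, RCLike.ofReal_real_eq_id, id, real_inner_smul_left,
    real_inner_comm]
  ring

theorem eigenvalues_mul_norm_sq_le (hA : A.IsSymmetric) (hN : Module.finrank ℝ E = N) {i : Fin N}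
    {w : E} (hw : ∀ j, i < j → ⟪hA.eigenvectorBasis hN j, w⟫ = 0) :
    hA.eigenvalues hN i * ‖w‖ ^ 2 ≤ ⟪w, A w⟫ := by
  rw [inner_apply_eq_sum_eigenvalues hA hN, ← (hA.eigenvectorBasis hN).sum_sq_inner_right,
    Finset.mul_sum]
  refine Finset.sum_le_sum fun j _ => ?_
  rcases lt_or_ge i j with hj | hj
  · simp [hw j hj]
  · exact mul_le_mul_of_nonneg_right (hA.eigenvalues_antitone hN hj) (sq_nonneg _)

theorem le_eigenvalues_mul_norm_sq (hA : A.IsSymmetric) (hN : Module.finrank ℝ E = N) {i : Fin N}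
    {w : E} (hw : ∀ j, j < i → ⟪hA.eigenvectorBasis hN j, w⟫ = 0) :
    ⟪w, A w⟫ ≤ hA.eigenvalues hN i * ‖w‖ ^ 2 := by
  rw [inner_apply_eq_sum_eigenvalues hA hN, ← (hA.eigenvectorBasis hN).sum_sq_inner_right,
    Finset.mul_sum]
  refine Finset.sum_le_sum fun j _ => ?_
  rcases lt_or_ge j i with hj | hj
  · simp [hw j hj]
  · exact mul_le_mul_of_nonneg_right (hA.eigenvalues_antitone hN hj) (sq_nonneg _)

theorem exists_ne_zero_inner_eq_zero (hN : Module.finrank ℝ E = N) (v : Fin N → E) (i : Fin N) :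
    ∃ w ≠ 0, ∀ j ≠ i, ⟪v j, w⟫ = 0 := by
  let L : E →ₗ[ℝ] ({j : Fin N // j ≠ i} → ℝ) := LinearMap.pi fun j => innerₛₗ ℝ (v j)
  have dim_lt : Module.finrank ℝ ({j : Fin N // j ≠ i} → ℝ) < Module.finrank ℝ E := by
    rw [hN, Module.finrank_fintype_fun_eq_card, Fintype.card_subtype_compl, Fintype.card_fin,
      Fintype.card_subtype_eq]
    exact Nat.sub_lt i.pos one_pos
  obtain ⟨w, hw, hw₀⟩ :=
    Submodule.exists_mem_ne_zero_of_ne_bot (LinearMap.ker_ne_bot_of_finrank_lt (f := L) dim_lt)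
  exact ⟨w, hw₀, fun j hj => congrFun (LinearMap.mem_ker.1 hw) ⟨j, hj⟩⟩

theorem mul_eigenvalues_add_le (hA : A.IsSymmetric) (hB : B.IsSymmetric)
    (hN : Module.finrank ℝ E = N) {K d : ℝ} (hK : 0 ≤ K)
    (hAB : ∀ w, K * ⟪w, A w⟫ + d * ‖w‖ ^ 2 ≤ ⟪w, B w⟫) (i : Fin N) :
    K * hA.eigenvalues hN i + d ≤ hB.eigenvalues hN i := by
  -- Only the `N - 1` indices `j ≠ i` impose a condition, so such a test vector exists.
  obtain ⟨w, hw₀, hw⟩ := exists_ne_zero_inner_eq_zero hN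
    (fun j => if i < j then hA.eigenvectorBasis hN j else hB.eigenvectorBasis hN j) i
  have lower : hA.eigenvalues hN i * ‖w‖ ^ 2 ≤ ⟪w, A w⟫ :=
    eigenvalues_mul_norm_sq_le hA hN fun j hj => by simpa [hj] using hw j hj.ne'
  have upper : ⟪w, B w⟫ ≤ hB.eigenvalues hN i * ‖w‖ ^ 2 :=
    le_eigenvalues_mul_norm_sq hB hN fun j hj => by simpa [hj.not_gt] using hw j hj.ne
  refine le_of_mul_le_mul_right ?_ (pow_pos (norm_pos_iff.2 hw₀) 2)
  linear_combination K * lower + upper + hAB w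

theorem mul_matrix_eigenvalues_add_le {ι : Type*} [Fintype ι] [DecidableEq ι] {P Q : Matrix ι ι ℝ}
    (hP : P.IsHermitian) (hQ : Q.IsHermitian) {K d : ℝ} (hK : 0 ≤ K)
    (hPQ : ∀ w, K * ⟪w, Matrix.toEuclideanLin P w⟫ + d * ‖w‖ ^ 2 ≤ ⟪w, Matrix.toEuclideanLin Q w⟫)
    (i : ι) : K * hP.eigenvalues i + d ≤ hQ.eigenvalues i := by
  unfold Matrix.IsHermitian.eigenvalues Matrix.IsHermitian.eigenvalues₀
  exact mul_eigenvalues_add_le _ _ _ hK hPQ _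

theorem matrix_eigenvalues_eq_of_conj {ι : Type*} [Fintype ι] [DecidableEq ι] {P Q : Matrix ι ι ℝ}
    (hP : P.IsHermitian) (hQ : Q.IsHermitian) (e : EuclideanSpace ℝ ι ≃ₗ[ℝ] EuclideanSpace ℝ ι)
    (hPQ : Matrix.toEuclideanLin P = e.conj (Matrix.toEuclideanLin Q)) :
    hP.eigenvalues = hQ.eigenvalues := by
  have eigenvalues₀_eq : hP.eigenvalues₀ = hQ.eigenvalues₀ := by
    refine (LinearMap.IsSymmetric.eigenvalues_eq_eigenvalues_iff _ _ _ _).2 ?_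
    rw [hPQ]
    exact e.charpoly_conj _
  unfold Matrix.IsHermitian.eigenvalues
  rw [eigenvalues₀_eq]

end CourantFischer

section SecondDerivativeTest

theorem deriv_deriv_nonpos_of_isLocalMax {g : ℝ → ℝ} {t : ℝ} (hmax : IsLocalMax g t)
    (hg : ContinuousAt g t) : deriv (deriv g) t ≤ 0 := by
  by_contra! pos
  have hmin := isLocalMin_of_deriv_deriv_pos pos hmax.deriv_eq_zero hg
  have const : g =ᶠ[𝓝 t] fun _ => g t := by
    filter_upwards [hmax, hmin] with s using le_antisymm
  simp [const.deriv.deriv_eq] at pos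

variable {E F : Type*} [NormedAddCommGroup E] [NormedSpace ℝ E] [NormedAddCommGroup F]
  [NormedSpace ℝ F]

theorem deriv_deriv_comp_line {f : E → F} {x : E} (hf : ContDiffAt ℝ 2 f x) (w : E) :
    deriv (deriv fun t : ℝ => f (x + t • w)) 0 = iteratedFDeriv ℝ 2 f x ![w, w] := by
  have line (t : ℝ) : HasDerivAt (fun t : ℝ => x + t • w) w t := by
    simpa using ((hasDerivAt_id t).smul_const w).const_add x
  have line_zero : x + (0 : ℝ) • w = x := by simp
  have line_tendsto : Tendsto (fun t : ℝ => x + t • w) (𝓝 0) (𝓝 x) := by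
    simpa only [ContinuousAt, line_zero] using (line 0).continuousAt
  have first : deriv (fun t : ℝ => f (x + t • w)) =ᶠ[𝓝 0] fun t => fderiv ℝ f (x + t • w) w := by
    filter_upwards [line_tendsto.eventually (hf.eventually (by simp))] with t ht
    exact ((ht.differentiableAt two_ne_zero).hasFDerivAt.comp_hasDerivAt t (line t)).deriv
  have fderiv_differentiable : DifferentiableAt ℝ (fderiv ℝ f) (x + (0 : ℝ) • w) := by
    rw [line_zero]
    exact (hf.fderiv_right (m := 1) le_rfl).differentiableAt one_ne_zero
  have second : HasDerivAt (fun t : ℝ => fderiv ℝ f (x + t • w) w)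
      (fderiv ℝ (fderiv ℝ f) (x + (0 : ℝ) • w) w w) 0 := by
    have comp := fderiv_differentiable.hasFDerivAt.comp_hasDerivAt (0 : ℝ) (line 0)
    simpa using comp.clm_apply (hasDerivAt_const (0 : ℝ) w)
  rw [first.deriv_eq, iteratedFDeriv_two_apply, second.deriv, line_zero]
  rfl

theorem iteratedFDeriv_two_nonpos_of_isLocalMax {f : E → ℝ} {x : E} (hmax : IsLocalMax f x)
    (hf : ContDiffAt ℝ 2 f x) (w : E) : iteratedFDeriv ℝ 2 f x ![w, w] ≤ 0 := by
  have line_continuous : ContinuousAt (fun t : ℝ => x + t • w) 0 := by fun_prop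
  have line_zero : x + (0 : ℝ) • w = x := by simp
  rw [← deriv_deriv_comp_line hf]
  refine deriv_deriv_nonpos_of_isLocalMax ?_ ?_
  · exact IsLocalMax.comp_continuous (f := f) (by rwa [line_zero]) line_continuous
  · exact ContinuousAt.comp_of_eq hf.continuousAt line_continuous line_zero

theorem iteratedFDeriv_two_norm_sq {H : Type*} [NormedAddCommGroup H] [InnerProductSpace ℝ H]
    (x w : H) : iteratedFDeriv ℝ 2 (fun y => ‖y‖ ^ 2) x ![w, w] = 2 * ‖w‖ ^ 2 := by
  have fderiv_eq : fderiv ℝ (fun y : H => ‖y‖ ^ 2) = ⇑(2 • innerSL ℝ : H →L[ℝ] H →L[ℝ] ℝ) :=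
    fderiv_norm_sq
  rw [iteratedFDeriv_two_apply, fderiv_eq, ContinuousLinearMap.fderiv]
  change 2 • ⟪w, w⟫ = _
  rw [real_inner_self_eq_norm_sq, nsmul_eq_mul, Nat.cast_two]

end SecondDerivativeTest

section Hessian

variable {n : ℕ}

theorem iteratedFDeriv_two_eq_inner (u : Euc n → ℝ) (x w z : Euc n) :
    iteratedFDeriv ℝ 2 u x ![w, z] = ⟪w, Matrix.toEuclideanLin (hessian u x) z⟫ := by
  have expand (v : Euc n) : v = ∑ i, v i • EuclideanSpace.single i (1 : ℝ) := by
    simpa using ((EuclideanSpace.basisFun (Fin n) ℝ).sum_repr v).symm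
  have entry (i j : Fin n) : hessian u x i j = fderiv ℝ (fderiv ℝ u) x
      (EuclideanSpace.single i 1) (EuclideanSpace.single j 1) :=
    iteratedFDeriv_two_apply u x _
  rw [iteratedFDeriv_two_apply]
  calc fderiv ℝ (fderiv ℝ u) x w z = ∑ j, ∑ i, z j * (w i * hessian u x i j) := by
        conv_lhs => rw [expand w, expand z]
        simp [entry, Finset.mul_sum]
    _ = ∑ i, (∑ j, hessian u x i j * z j) * w i := by
        rw [Finset.sum_comm]
        refine Finset.sum_congr rfl fun i _ => ?_
        rw [Finset.sum_mul]
        exact Finset.sum_congr rfl fun j _ => by ring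
    _ = ⟪w, Matrix.toEuclideanLin (hessian u x) z⟫ := by
        simp [PiLp.inner_apply, Matrix.toLpLin_apply, Matrix.mulVec, dotProduct]

theorem isHermitian_hessian {u : Euc n → ℝ} {x : Euc n} (hu : ContDiffAt ℝ 2 u x) :
    (hessian u x).IsHermitian := by
  ext i j
  simpa [hessian, iteratedFDeriv_two_apply] using (hu.isSymmSndFDerivAt (by simp)).eq _ _

theorem toEuclideanLin_hessian_comp (u : Euc n → ℝ) (R : Euc n ≃ₗᵢ[ℝ] Euc n) (x : Euc n) :
    Matrix.toEuclideanLin (hessian (u ∘ R) x) =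
      R.symm.toLinearEquiv.conj (Matrix.toEuclideanLin (hessian u (R x))) := by
  have chain_rule (w z : Euc n) :
      iteratedFDeriv ℝ 2 (u ∘ R) x ![w, z] = iteratedFDeriv ℝ 2 u (R x) ![R w, R z] := by
    have comp_eq := R.toContinuousLinearEquiv.iteratedFDerivWithin_comp_right u uniqueDiffOn_univ
      (mem_univ (R x)) 2
    simp only [preimage_univ, iteratedFDerivWithin_univ] at comp_eq
    refine (congrArg (· ![w, z]) comp_eq).trans ?_
    rw [ContinuousMultilinearMap.compContinuousLinearMap_apply]
    refine congrArg (iteratedFDeriv ℝ 2 u (R x)) (funext fun i => ?_)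
    fin_cases i <;> rfl
  refine LinearMap.ext fun z => ext_inner_left ℝ fun w => ?_
  rw [← iteratedFDeriv_two_eq_inner, chain_rule, iteratedFDeriv_two_eq_inner,
    ← R.symm.inner_map_map, R.symm_apply_apply]
  rfl

theorem not_isLocalMax_of_inGardingCone {k : ℕ} (hk : 1 ≤ k) {u : Euc n → ℝ} {x : Euc n}
    (hu : ContDiffAt ℝ 2 u x) (hcone : InGardingCone k (hessian u x)) : ¬ IsLocalMax u x := by
  intro hmax
  obtain ⟨hA, cone⟩ := hcone
  have trace_pos : 0 < (hessian u x).trace := by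
    rw [hA.trace_eq_sum_eigenvalues]
    simpa [esymmVec, Finset.powersetCard_one] using cone 1 le_rfl hk
  have diag_nonpos (i : Fin n) : hessian u x i i ≤ 0 :=
    iteratedFDeriv_two_nonpos_of_isLocalMax hmax hu _
  exact trace_pos.not_ge (Finset.sum_nonpos fun i _ => diag_nonpos i)

/-- Pointwise form of "`u` is a strictly `k`-convex solution of `σ_k(D²u) = 1`", required with the
full (not one-sided) second derivatives of `u` at `x`. -/
structure IsKHessianSolAt (k : ℕ) (u : Euc n → ℝ) (x : Euc n) : Prop where
  contDiffAt : ContDiffAt ℝ 2 u x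
  inGardingCone : InGardingCone k (hessian u x)
  sigmaMat_eq_one : sigmaMat k (hessian u x) = 1

namespace IsKHessianSolAt

variable {k : ℕ} {u v : Euc n → ℝ} {x : Euc n}

theorem of_hessianWithin {s : Set (Euc n)} (hs : s ∈ 𝓝 x) (hu : ContDiffOn ℝ 2 u s)
    (h : InGardingCone k (hessianWithin u s x) ∧ sigmaMat k (hessianWithin u s x) = 1) :
    IsKHessianSolAt k u x := by
  have hess_eq : hessianWithin u s x = hessian u x := by
    unfold hessianWithin hessian
    rw [iteratedFDerivWithin_congr_set (eventuallyEq_univ.2 hs), iteratedFDerivWithin_univ]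
  rw [hess_eq] at h
  exact ⟨hu.contDiffAt hs, h.1, h.2⟩

theorem esymmVec_eigenvalues_eq_one (hu : IsKHessianSolAt k u x)
    (hA : (hessian u x).IsHermitian) : esymmVec k hA.eigenvalues = 1 := by
  simpa only [sigmaMat, dif_pos hA] using hu.sigmaMat_eq_one

theorem comp_isometry {R : Euc n ≃ₗᵢ[ℝ] Euc n} (hu : IsKHessianSolAt k u (R x)) :
    IsKHessianSolAt k (u ∘ R) x := by
  have smooth : ContDiffAt ℝ 2 (u ∘ R) x := hu.contDiffAt.comp x R.contDiff.contDiffAt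
  obtain ⟨hA, cone⟩ := hu.inGardingCone
  have hB := isHermitian_hessian smooth
  have eigenvalues_eq : hB.eigenvalues = hA.eigenvalues :=
    matrix_eigenvalues_eq_of_conj hB hA _ (toEuclideanLin_hessian_comp u R x)
  refine ⟨smooth, ⟨hB, eigenvalues_eq ▸ cone⟩, ?_⟩
  rw [sigmaMat, dif_pos hB, eigenvalues_eq, hu.esymmVec_eigenvalues_eq_one hA]

theorem not_isLocalMax (hk : 1 ≤ k) (hu : IsKHessianSolAt k u x) : ¬ IsLocalMax u x :=
  not_isLocalMax_of_inGardingCone hk hu.contDiffAt hu.inGardingCone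

theorem not_isLocalMax_mul_sub_add_norm_sq (hk : 1 ≤ k) (hu : IsKHessianSolAt k u x)
    (hv : IsKHessianSolAt k v x) {K d : ℝ} (hK : 1 ≤ K) (hd : 0 < d) :
    ¬ IsLocalMax (fun y => K * u y - v y + d * ‖y‖ ^ 2) x := by
  intro hmax
  obtain ⟨hA, cone⟩ := hu.inGardingCone
  have hB := isHermitian_hessian hv.contDiffAt
  have smooth_Ku : ContDiffAt ℝ 2 (K • u) x := hu.contDiffAt.const_smul K
  have smooth_norm : ContDiffAt ℝ 2 (fun y : Euc n => ‖y‖ ^ 2) x := (contDiff_norm_sq ℝ).contDiffAt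
  have smooth_dnorm : ContDiffAt ℝ 2 (d • fun y : Euc n => ‖y‖ ^ 2) x := smooth_norm.const_smul d
  have smooth_diff : ContDiffAt ℝ 2 (K • u - v) x := smooth_Ku.sub hv.contDiffAt
  have form_le (w : Euc n) : K * ⟪w, Matrix.toEuclideanLin (hessian u x) w⟫ + 2 * d * ‖w‖ ^ 2 ≤
      ⟪w, Matrix.toEuclideanLin (hessian v x) w⟫ := by
    have nonpos : iteratedFDeriv ℝ 2 (K • u - v + d • fun y => ‖y‖ ^ 2) x ![w, w] ≤ 0 :=
      iteratedFDeriv_two_nonpos_of_isLocalMax hmax (smooth_diff.add smooth_dnorm) w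
    rw [iteratedFDeriv_add_apply smooth_diff smooth_dnorm,
      iteratedFDeriv_sub_apply smooth_Ku hv.contDiffAt,
      iteratedFDeriv_const_smul_apply hu.contDiffAt,
      iteratedFDeriv_const_smul_apply smooth_norm] at nonpos
    simp only [add_apply, sub_apply, smul_apply, smul_eq_mul, iteratedFDeriv_two_norm_sq,
      iteratedFDeriv_two_eq_inner] at nonpos
    linarith
  have eigenvalues_lt (i : Fin n) : K * hA.eigenvalues i < hB.eigenvalues i := by
    have := mul_matrix_eigenvalues_add_le hA hB (zero_le_one.trans hK) form_le i
    linarith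
  have sigma_lt := esymmVec_lt_esymmVec hk hK cone eigenvalues_lt
  rw [hu.esymmVec_eigenvalues_eq_one, hv.esymmVec_eigenvalues_eq_one] at sigma_lt
  exact sigma_lt.false

end IsKHessianSolAt

end Hessian

section MaximumPrinciple

theorem lt_of_forall_not_isLocalMax {X α : Type*} [TopologicalSpace X] [LinearOrder α]
    [TopologicalSpace α] [ClosedIciTopology α] {D : Set X} (hD : IsOpen D)
    (hcpt : IsCompact (closure D)) {f : X → α} (hf : ContinuousOn f (closure D))
    (hmax : ∀ x ∈ D, ¬ IsLocalMax f x) {c : α} (hfr : ∀ x ∈ frontier D, f x ≤ c) {x : X}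
    (hx : x ∈ D) : f x < c := by
  have not_max {y : X} (hy : y ∈ D) : ¬ IsMaxOn f (closure D) y := fun h =>
    hmax y hy (h.isLocalMax (mem_of_superset (hD.mem_nhds hy) subset_closure))
  obtain ⟨y, hy, hymax⟩ := hcpt.exists_isMaxOn ⟨x, subset_closure hx⟩ hf
  have y_frontier : y ∈ frontier D := hD.frontier_eq ▸ ⟨hy, fun hyD => not_max hyD hymax⟩
  by_contra! hc
  exact not_max hx fun z hz => (hymax hz).trans ((hfr y y_frontier).trans hc)

variable {n k : ℕ} {D : Set (Euc n)} {u v : Euc n → ℝ}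

theorem mul_le_add_of_isKHessianSolAt (hk : 1 ≤ k) (hD : IsOpen D) (hDb : IsBounded D)
    (hu : ContinuousOn u (closure D)) (hv : ContinuousOn v (closure D))
    (hu_sol : ∀ x ∈ D, IsKHessianSolAt k u x) (hv_sol : ∀ x ∈ D, IsKHessianSolAt k v x)
    {K c : ℝ} (hK : 1 ≤ K) (hfr : ∀ x ∈ frontier D, K * u x ≤ v x + c) {x : Euc n} (hx : x ∈ D) :
    K * u x ≤ v x + c := by
  have hcpt : IsCompact (closure D) := hDb.isCompact_closure
  obtain ⟨r, hr⟩ := hDb.closure.exists_norm_le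
  refine le_of_forall_pos_le_add fun δ hδ => ?_
  set d := δ / (r ^ 2 + 1)
  have hd : 0 < d := by positivity
  have perturbed_lt : K * u x - v x + d * ‖x‖ ^ 2 < c + d * r ^ 2 := by
    refine lt_of_forall_not_isLocalMax hD hcpt (by fun_prop)
      (fun y hy => (hu_sol y hy).not_isLocalMax_mul_sub_add_norm_sq hk (hv_sol y hy) hK hd)
      (fun y hy => ?_) hx
    have norm_le : ‖y‖ ^ 2 ≤ r ^ 2 :=
      pow_le_pow_left₀ (norm_nonneg y) (hr y (frontier_subset_closure hy)) 2
    linear_combination hfr y hy + d * norm_le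
  have d_mul_le : d * r ^ 2 ≤ δ := by
    rw [div_mul_eq_mul_div, div_le_iff₀ (by positivity)]
    linarith
  linarith [mul_nonneg hd.le (sq_nonneg ‖x‖)]

theorem abs_sub_le_of_isKHessianSolAt (hk : 1 ≤ k) (hD : IsOpen D) (hDb : IsBounded D)
    (hu : ContinuousOn u (closure D)) (hv : ContinuousOn v (closure D))
    (hu_sol : ∀ x ∈ D, IsKHessianSolAt k u x) (hv_sol : ∀ x ∈ D, IsKHessianSolAt k v x)
    {c : ℝ} (hfr : ∀ x ∈ frontier D, |u x - v x| ≤ c) {x : Euc n} (hx : x ∈ D) :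
    |u x - v x| ≤ c := by
  have upper := mul_le_add_of_isKHessianSolAt hk hD hDb hu hv hu_sol hv_sol (c := c) le_rfl
    (fun y hy => by linarith [(abs_le.1 (hfr y hy)).2]) hx
  have lower := mul_le_add_of_isKHessianSolAt hk hD hDb hv hu hv_sol hu_sol (c := c) le_rfl
    (fun y hy => by linarith [(abs_le.1 (hfr y hy)).1]) hx
  exact abs_le.2 ⟨by linarith, by linarith⟩

end MaximumPrinciple

section RingGeometry

theorem frontier_diff_closedBall_subset {E : Type*} [SeminormedAddCommGroup E]
    (Ω : Set E) (x₀ : E) (ε : ℝ) :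
    frontier (Ω \ closedBall x₀ ε) ⊆ frontier Ω ∪ sphere x₀ ε := by
  refine (frontier_inter_subset Ω (closedBall x₀ ε)ᶜ).trans (union_subset_union ?_ ?_)
  · exact inter_subset_left
  · rw [frontier_compl]
    exact inter_subset_right.trans frontier_closedBall_subset_sphere

variable {E : Type*} [NormedAddCommGroup E] [NormedSpace ℝ E]

theorem ball_add_subset_compl_closedBall {x₀ x : E} {ε : ℝ} (hx : ε ≤ dist x x₀) :
    ball (x + (x - x₀)) (dist x x₀) ⊆ (closedBall x₀ ε)ᶜ := by
  intro y hy hyball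
  have center_dist : dist (x + (x - x₀)) x₀ = 2 * dist x x₀ := by
    rw [dist_eq_norm, dist_eq_norm, show x + (x - x₀) - x₀ = (2 : ℝ) • (x - x₀) by module,
      norm_smul, Real.norm_two]
  have triangle := dist_triangle_left (x + (x - x₀)) x₀ y
  linarith [mem_ball.1 hy, mem_closedBall.1 hyball]

theorem uniqueDiffWithinAt_compl_closedBall {x₀ x : E} {ε : ℝ} (hε : 0 < ε)
    (hx : ε ≤ dist x x₀) : UniqueDiffWithinAt ℝ (closedBall x₀ ε)ᶜ x := by
  have radius_pos : 0 < dist x x₀ := hε.trans_le hx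
  refine UniqueDiffWithinAt.mono ?_ (ball_add_subset_compl_closedBall hx)
  refine uniqueDiffWithinAt_convex (convex_ball _ _) ?_ ?_
  · rw [isOpen_ball.interior_eq]
    exact nonempty_ball.2 radius_pos
  · rw [closure_ball _ radius_pos.ne', mem_closedBall, dist_self_add_right, dist_eq_norm]

theorem uniqueDiffOn_closure_diff_closedBall {Ω : Set E} (hΩ : IsOpen Ω) (hconv : Convex ℝ Ω)
    {x₀ : E} {ε : ℝ} (hε : 0 < ε) (hball : closedBall x₀ ε ⊆ Ω) :
    UniqueDiffOn ℝ (closure (Ω \ closedBall x₀ ε)) := by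
  intro x hx
  refine UniqueDiffWithinAt.mono ?_ subset_closure
  rw [sdiff_eq]
  by_cases hxΩ : x ∈ Ω
  · have dist_ge : ε ≤ dist x x₀ := by
      have : closure (closedBall x₀ ε)ᶜ ⊆ {y | ε ≤ dist y x₀} :=
        closure_minimal (fun y hy => (not_le.1 (mt mem_closedBall.2 hy)).le)
          (isClosed_le continuous_const (continuous_id.dist continuous_const))
      exact this (closure_mono (fun y hy => hy.2) hx)
    rw [inter_comm]
    exact (uniqueDiffWithinAt_compl_closedBall hε dist_ge).inter (hΩ.mem_nhds hxΩ)
  · have convex_case : UniqueDiffWithinAt ℝ Ω x :=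
      uniqueDiffWithinAt_convex hconv
        (hΩ.interior_eq.symm ▸ ⟨x₀, hball (mem_closedBall_self hε.le)⟩)
        (closure_mono sdiff_subset hx)
    exact convex_case.inter (isClosed_closedBall.isOpen_compl.mem_nhds fun h => hxΩ (hball h))

end RingGeometry

section Barrier

variable {n k : ℕ} {Ω : Set (Euc n)} {x₀ : Euc n} {ε M : ℝ} {u ψ : Euc n → ℝ}

theorem IsSol.continuousOn (hu : IsSol k Ω x₀ ε M u) : ContinuousOn u (ringSet Ω x₀ ε) :=
  hu.1.continuousOn

theorem IsSol.eq_zero_of_mem_frontier (hu : IsSol k Ω x₀ ε M u) {x : Euc n}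
    (hx : x ∈ frontier Ω) : u x = 0 :=
  hu.2.2.1 x hx

theorem IsSol.eq_neg_of_mem_sphere (hu : IsSol k Ω x₀ ε M u) {x : Euc n}
    (hx : x ∈ sphere x₀ ε) : u x = -M :=
  hu.2.2.2 x hx

theorem IsSol.isKHessianSolAt (hΩ : IsOpen Ω) (hu : IsSol k Ω x₀ ε M u) {x : Euc n}
    (hx : x ∈ Ω \ closedBall x₀ ε) : IsKHessianSolAt k u x :=
  .of_hessianWithin
    (mem_of_superset ((hΩ.sdiff isClosed_closedBall).mem_nhds hx) subset_closure) hu.1 (hu.2.1 x hx)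

theorem IsSol22.eq_zero_of_mem_frontier (hψ : IsSol22 k Ω ψ) {x : Euc n} (hx : x ∈ frontier Ω) :
    ψ x = 0 :=
  hψ.2.2 x hx

theorem IsSol22.contDiffOn_two (hψ : IsSol22 k Ω ψ) : ContDiffOn ℝ 2 ψ (closure Ω) :=
  hψ.1.of_le (WithTop.coe_le_coe.2 (le_top : (2 : ℕ∞) ≤ ⊤))

theorem IsSol22.isKHessianSolAt (hΩ : IsOpen Ω) (hψ : IsSol22 k Ω ψ) {x : Euc n} (hx : x ∈ Ω) :
    IsKHessianSolAt k ψ x :=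
  .of_hessianWithin (mem_of_superset (hΩ.mem_nhds hx) subset_closure) hψ.contDiffOn_two
    (hψ.2.1 x hx)

theorem IsSol22.neg (hk : 1 ≤ k) (hΩ : IsOpen Ω) (hΩb : IsBounded Ω) (hψ : IsSol22 k Ω ψ)
    {x : Euc n} (hx : x ∈ Ω) : ψ x < 0 :=
  lt_of_forall_not_isLocalMax hΩ hΩb.isCompact_closure hψ.1.continuousOn
    (fun _ hy => (hψ.isKHessianSolAt hΩ hy).not_isLocalMax hk)
    (fun _ hy => (hψ.eq_zero_of_mem_frontier hy).le) hx

theorem forall_mem_ringSet_of_frontier {p : Euc n → Prop}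
    (hfr : ∀ y ∈ frontier Ω, p y) (hsphere : ∀ y ∈ sphere x₀ ε, p y)
    (hint : (∀ y ∈ frontier (Ω \ closedBall x₀ ε), p y) → ∀ y ∈ Ω \ closedBall x₀ ε, p y)
    {x : Euc n} (hx : x ∈ ringSet Ω x₀ ε) : p x := by
  have frontier_case : ∀ y ∈ frontier (Ω \ closedBall x₀ ε), p y := fun y hy =>
    (frontier_diff_closedBall_subset Ω x₀ ε hy).elim (hfr y) (hsphere y)
  rw [ringSet, closure_eq_self_union_frontier] at hx
  exact hx.elim (hint frontier_case x) (frontier_case x)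

theorem IsSol.nonpos (hk : 1 ≤ k) (hΩ : IsOpen Ω) (hΩb : IsBounded Ω) (hM : 0 ≤ M)
    (hu : IsSol k Ω x₀ ε M u) {x : Euc n} (hx : x ∈ ringSet Ω x₀ ε) : u x ≤ 0 := by
  refine forall_mem_ringSet_of_frontier (fun y hy => (hu.eq_zero_of_mem_frontier hy).le)
    (fun y hy => by linarith [hu.eq_neg_of_mem_sphere hy]) (fun hfr y hy => ?_) hx
  exact (lt_of_forall_not_isLocalMax (hΩ.sdiff isClosed_closedBall)
    (hΩb.subset sdiff_subset).isCompact_closure hu.continuousOn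
    (fun _ hz => (hu.isKHessianSolAt hΩ hz).not_isLocalMax hk) hfr hy).le

theorem IsSol.mul_le (hk : 1 ≤ k) (hΩ : IsOpen Ω) (hΩb : IsBounded Ω)
    (hψ : IsSol22 k Ω ψ) (hu : IsSol k Ω x₀ ε M u) {K : ℝ} (hK : 1 ≤ K)
    (hKψ : ∀ y ∈ sphere x₀ ε, K * ψ y ≤ -M) {x : Euc n} (hx : x ∈ ringSet Ω x₀ ε) :
    K * ψ x ≤ u x := by
  refine forall_mem_ringSet_of_frontier
    (fun y hy => by
      rw [hψ.eq_zero_of_mem_frontier hy, hu.eq_zero_of_mem_frontier hy, mul_zero])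
    (fun y hy => (hKψ y hy).trans_eq (hu.eq_neg_of_mem_sphere hy).symm) (fun hfr y hy => ?_) hx
  simpa only [add_zero] using mul_le_add_of_isKHessianSolAt (c := 0) hk
    (hΩ.sdiff isClosed_closedBall) (hΩb.subset sdiff_subset)
    (hψ.1.continuousOn.mono (closure_mono sdiff_subset)) hu.continuousOn
    (fun z hz => hψ.isKHessianSolAt hΩ hz.1) (fun z hz => hu.isKHessianSolAt hΩ hz) hK
    (by simpa only [add_zero] using hfr) hy

theorem exists_one_le_mul_le_neg {X : Type*} [TopologicalSpace X] {s : Set X} (hs : IsCompact s)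
    {f : X → ℝ} (hf : ContinuousOn f s) (hneg : ∀ x ∈ s, f x < 0) (M : ℝ) :
    ∃ K : ℝ, 1 ≤ K ∧ ∀ x ∈ s, K * f x ≤ -M := by
  obtain rfl | hne := s.eq_empty_or_nonempty
  · exact ⟨1, le_rfl, fun _ h => h.elim⟩
  obtain ⟨y, hy, hmax⟩ := hs.exists_isMaxOn hne hf
  refine ⟨max 1 (M / -f y), le_max_left _ _, fun x hx => ?_⟩
  calc max 1 (M / -f y) * f x
      ≤ max 1 (M / -f y) * f y :=
        mul_le_mul_of_nonneg_left (hmax hx) (zero_le_one.trans (le_max_left _ _))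
    _ ≤ M / -f y * f y := mul_le_mul_of_nonpos_right (le_max_right _ _) (hneg y hy).le
    _ = -M := by field_simp [(hneg y hy).ne]

theorem IsSol22.exists_abs_le_mul_dist (hk : 1 ≤ k) (hΩ : IsOpen Ω) (hconv : Convex ℝ Ω)
    (hΩb : IsBounded Ω) (hψ : IsSol22 k Ω ψ) {ε₀ : ℝ} (hball : closedBall x₀ ε₀ ⊆ Ω)
    (hM : 0 ≤ M) :
    ∃ L : ℝ, 0 ≤ L ∧ ∀ ε ≤ ε₀, ∀ u : Euc n → ℝ, IsSol k Ω x₀ ε M u →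
      ∀ y ∈ ringSet Ω x₀ ε, ∀ z ∈ frontier Ω, |u y| ≤ L * dist y z := by
  obtain ⟨K, hK, hKψ⟩ := exists_one_le_mul_le_neg (isCompact_closedBall x₀ ε₀)
    (hψ.1.continuousOn.mono (hball.trans subset_closure))
    (fun x hx => hψ.neg hk hΩ hΩb (hball hx)) M
  obtain ⟨L, hL⟩ := hψ.contDiffOn_two.exists_lipschitzOnWith two_ne_zero hconv.closure
    hΩb.isCompact_closure
  have : 0 ≤ K := zero_le_one.trans hK
  refine ⟨K * L, by positivity, fun ε hε u hu y hy z hz => ?_⟩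
  have barrier : K * ψ y ≤ u y := hu.mul_le hk hΩ hΩb hψ hK
    (fun w hw => hKψ w (closedBall_subset_closedBall hε (sphere_subset_closedBall hw))) hy
  calc |u y| = -u y := abs_of_nonpos (hu.nonpos hk hΩ hΩb hM hy)
    _ ≤ K * (ψ z - ψ y) := by rw [hψ.eq_zero_of_mem_frontier hz]; linarith
    _ ≤ K * (L * dist y z) := by
        gcongr
        rw [dist_comm]
        exact (le_abs_self _).trans (hL.dist_le_mul z (frontier_subset_closure hz) y
          (closure_mono sdiff_subset hy))
    _ = K * L * dist y z := (mul_assoc _ _ _).symm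

end Barrier

section SkewAdjointFlow

variable {E : Type*} [NormedAddCommGroup E] [InnerProductSpace ℝ E] [CompleteSpace E]

/-- The one-parameter group of rotations `t ↦ exp (t A)` generated by a skew-adjoint operator `A`,
bundled as linear isometries. -/
def skewAdjointFlow (A : skewAdjoint (E →L[ℝ] E)) (t : ℝ) : E ≃ₗᵢ[ℝ] E :=
  letI := NormedAlgebra.restrictScalars ℚ ℝ (E →L[ℝ] E)
  Unitary.linearIsometryEquiv
    ⟨NormedSpace.exp (t • A : skewAdjoint (E →L[ℝ] E)).1,
      NormedSpace.exp_mem_unitary_of_mem_skewAdjoint (t • A).2⟩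

variable (A : skewAdjoint (E →L[ℝ] E))

theorem skewAdjointFlow_apply (t : ℝ) (x : E) :
    skewAdjointFlow A t x = NormedSpace.exp (t • (A : E →L[ℝ] E)) x :=
  rfl

theorem skewAdjointFlow_zero_apply (x : E) : skewAdjointFlow A 0 x = x := by
  rw [skewAdjointFlow_apply, zero_smul, NormedSpace.exp_zero, one_apply_eq_self]

theorem hasDerivAt_skewAdjointFlow_apply (t : ℝ) (x : E) :
    HasDerivAt (fun s => skewAdjointFlow A s x) (skewAdjointFlow A t (A.1 x)) t := by
  simpa using! (hasDerivAt_exp_smul_const (A : E →L[ℝ] E) t).clm_apply (hasDerivAt_const t x)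

theorem norm_skewAdjointFlow_apply_sub_le (t : ℝ) (x : E) :
    ‖skewAdjointFlow A t x - x‖ ≤ ‖A.1‖ * ‖x‖ * |t| := by
  have mean_value := convex_univ.norm_image_sub_le_of_norm_hasDerivWithin_le
    (fun s _ => (hasDerivAt_skewAdjointFlow_apply A s x).hasDerivWithinAt)
    (fun s _ => ((skewAdjointFlow A s).norm_map _).trans_le (A.1.le_opNorm x))
    (mem_univ 0) (mem_univ t)
  rwa [skewAdjointFlow_zero_apply, sub_zero, Real.norm_eq_abs] at mean_value

end SkewAdjointFlow

section AngularDerivative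

variable {n k : ℕ} {Ω : Set (Euc n)} {ε M L r : ℝ} {u : Euc n → ℝ}

theorem IsSol.abs_sub_comp_isometry_le (hk : 1 ≤ k) (hΩ : IsOpen Ω) (hΩb : IsBounded Ω)
    (hu : IsSol k Ω 0 ε M u)
    (hL : ∀ y ∈ ringSet Ω 0 ε, ∀ z ∈ frontier Ω, |u y| ≤ L * dist y z)
    {R : Euc n ≃ₗᵢ[ℝ] Euc n} {c : ℝ} (hc : 0 ≤ c) (hR : ∀ y ∈ closure Ω, L * dist (R y) y ≤ c)
    {x : Euc n} (hx : x ∈ Ω \ closedBall 0 ε) (hRx : R x ∈ Ω \ closedBall 0 ε) :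
    |u x - u (R x)| ≤ c := by
  set D := Ω \ closedBall (0 : Euc n) ε
  have hD : IsOpen D := hΩ.sdiff isClosed_closedBall
  have left_closure : closure (D ∩ R ⁻¹' D) ⊆ closure D := closure_mono inter_subset_left
  have right_closure : closure (D ∩ R ⁻¹' D) ⊆ R ⁻¹' closure D :=
    (closure_mono inter_subset_right).trans (R.continuous.closure_preimage_subset D)
  have mem_sphere_iff (y : Euc n) : R y ∈ sphere (0 : Euc n) ε ↔ y ∈ sphere (0 : Euc n) ε := by
    rw [mem_sphere_zero_iff_norm, mem_sphere_zero_iff_norm, R.norm_map]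
  have sphere_case {y : Euc n} (hy : y ∈ sphere 0 ε) : |u y - u (R y)| ≤ c := by
    rwa [hu.eq_neg_of_mem_sphere hy, hu.eq_neg_of_mem_sphere ((mem_sphere_iff y).2 hy), sub_self,
      abs_zero]
  refine abs_sub_le_of_isKHessianSolAt (v := u ∘ R) hk (hD.inter (hD.preimage R.continuous))
    (hΩb.subset (inter_subset_left.trans sdiff_subset)) (hu.continuousOn.mono left_closure)
    (hu.continuousOn.comp R.continuous.continuousOn right_closure)
    (fun y hy => hu.isKHessianSolAt hΩ hy.1)
    (fun y hy => (hu.isKHessianSolAt hΩ hy.2).comp_isometry) (fun y hy => ?_)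
    (show x ∈ D ∩ R ⁻¹' D from ⟨hx, hRx⟩)
  have y_mem : y ∈ closure D := left_closure (frontier_subset_closure hy)
  have Ry_mem : R y ∈ closure D := right_closure (frontier_subset_closure hy)
  have rotation_bound : L * dist (R y) y ≤ c := hR y (closure_mono sdiff_subset y_mem)
  obtain ⟨hyD, -⟩ | ⟨-, hyD⟩ := frontier_inter_subset _ _ hy
  · obtain hyΩ | hy_sphere := frontier_diff_closedBall_subset Ω 0 ε hyD
    · rw [hu.eq_zero_of_mem_frontier hyΩ, zero_sub, abs_neg]
      exact (hL _ Ry_mem y hyΩ).trans rotation_bound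
    · exact sphere_case hy_sphere
  · have Ry_frontier : R y ∈ frontier D := by
      rwa [← R.coe_toHomeomorph, ← R.toHomeomorph.preimage_frontier] at hyD
    obtain hRyΩ | hRy_sphere := frontier_diff_closedBall_subset Ω 0 ε Ry_frontier
    · rw [Function.comp_apply, hu.eq_zero_of_mem_frontier hRyΩ, sub_zero]
      exact (hL y y_mem _ hRyΩ).trans (dist_comm (R y) y ▸ rotation_bound)
    · exact sphere_case ((mem_sphere_iff y).1 hRy_sphere)

theorem IsSol.abs_fderiv_skewAdjoint_le (hk : 1 ≤ k) (hΩ : IsOpen Ω)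
    (hu : IsSol k Ω 0 ε M u) (hL₀ : 0 ≤ L)
    (hL : ∀ y ∈ ringSet Ω 0 ε, ∀ z ∈ frontier Ω, |u y| ≤ L * dist y z)
    (hr : ∀ y ∈ closure Ω, ‖y‖ ≤ r) (A : skewAdjoint (Euc n →L[ℝ] Euc n))
    {x : Euc n} (hx : x ∈ Ω \ closedBall 0 ε) :
    |fderiv ℝ u x (A.1 x)| ≤ L * r * ‖A.1‖ := by
  have hΩb : IsBounded Ω := (isBounded_iff_forall_norm_le.2 ⟨r, hr⟩).subset subset_closure
  have hr₀ : 0 ≤ r := (norm_nonneg x).trans (hr x (subset_closure hx.1))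
  have orbit_deriv : HasDerivAt (fun t => skewAdjointFlow A t x) (A.1 x) 0 := by
    simpa only [skewAdjointFlow_zero_apply] using hasDerivAt_skewAdjointFlow_apply A 0 x
  have u_deriv : HasFDerivAt u (fderiv ℝ u x) (skewAdjointFlow A 0 x) := by
    rw [skewAdjointFlow_zero_apply]
    exact ((hu.isKHessianSolAt hΩ hx).contDiffAt.differentiableAt two_ne_zero).hasFDerivAt
  have orbit_mem : ∀ᶠ t in 𝓝 (0 : ℝ), skewAdjointFlow A t x ∈ Ω \ closedBall 0 ε := by
    refine orbit_deriv.continuousAt.eventually_mem ((hΩ.sdiff isClosed_closedBall).mem_nhds ?_)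
    rwa [skewAdjointFlow_zero_apply]
  rw [← Real.norm_eq_abs]
  refine (u_deriv.comp_hasDerivAt 0 orbit_deriv).le_of_lip' (C := L * r * ‖A.1‖) (by positivity) ?_
  filter_upwards [orbit_mem] with t ht
  rw [Function.comp_apply, Function.comp_apply, skewAdjointFlow_zero_apply, norm_sub_rev, sub_zero,
    Real.norm_eq_abs, Real.norm_eq_abs]
  refine hu.abs_sub_comp_isometry_le hk hΩ hΩb hL (by positivity) (fun y hy => ?_) hx ht
  calc L * dist (skewAdjointFlow A t y) y
      ≤ L * (‖A.1‖ * ‖y‖ * |t|) := by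
        rw [dist_eq_norm]
        gcongr
        exact norm_skewAdjointFlow_apply_sub_le A t y
    _ ≤ L * (‖A.1‖ * r * |t|) := by gcongr; exact hr y hy
    _ = L * r * ‖A.1‖ * |t| := by ring

end AngularDerivative

section PlaneRotation

variable {E : Type*} [NormedAddCommGroup E] [InnerProductSpace ℝ E] [CompleteSpace E]

/-- The generator `z ↦ ⟪x, z⟫ y - ⟪y, z⟫ x` of rotations in the plane spanned by `x` and `y`; for
coordinate vectors, applying `Du` to it gives the angular derivative of `u`. -/
def planeRotationGenerator (x y : E) : skewAdjoint (E →L[ℝ] E) :=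
  ⟨InnerProductSpace.rankOne ℝ y x - InnerProductSpace.rankOne ℝ x y, by
    rw [skewAdjoint.mem_iff, star_sub, ContinuousLinearMap.star_eq_adjoint,
      ContinuousLinearMap.star_eq_adjoint, InnerProductSpace.adjoint_rankOne,
      InnerProductSpace.adjoint_rankOne, neg_sub]⟩

theorem planeRotationGenerator_apply (x y z : E) :
    (planeRotationGenerator x y).1 z = ⟪x, z⟫ • y - ⟪y, z⟫ • x :=
  rfl

theorem norm_planeRotationGenerator_le (x y : E) :
    ‖(planeRotationGenerator x y).1‖ ≤ 2 * (‖x‖ * ‖y‖) := by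
  refine (norm_sub_le _ _).trans_eq ?_
  rw [InnerProductSpace.norm_rankOne, InnerProductSpace.norm_rankOne]
  ring

theorem abs_angular_le_of_skewAdjoint {n : ℕ} {ℓ : Euc n →L[ℝ] ℝ} {x : Euc n} {C : ℝ} (hC : 0 ≤ C)
    (h : ∀ A : skewAdjoint (Euc n →L[ℝ] Euc n), |ℓ (A.1 x)| ≤ C * ‖A.1‖) (i j : Fin n) :
    |x i * ℓ (EuclideanSpace.single j 1) - x j * ℓ (EuclideanSpace.single i 1)| ≤ C * 2 := by
  have norm_le : ‖(planeRotationGenerator (EuclideanSpace.single i (1 : ℝ)) (.single j 1)).1‖ ≤ 2 :=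
    (norm_planeRotationGenerator_le _ _).trans_eq (by simp)
  simpa [planeRotationGenerator_apply, EuclideanSpace.inner_single_left] using
    (h (planeRotationGenerator (.single i 1) (.single j 1))).trans
      (mul_le_mul_of_nonneg_left norm_le hC)

end PlaneRotation

theorem statement8_general {n k : ℕ} (hk : 1 ≤ k) {Ω : Set (Euc n)} (hΩ : IsOpen Ω)
    (hconv : Convex ℝ Ω) (hΩb : IsBounded Ω) {ε₀ : ℝ} (hball : closedBall 0 ε₀ ⊆ Ω)
    {ψ : Euc n → ℝ} (hψ : IsSol22 k Ω ψ) {M : ℝ} (hM : 0 ≤ M) :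
    ∃ C : ℝ, 0 < C ∧ ∀ ε ∈ Ioc 0 ε₀, ∀ u : Euc n → ℝ, IsSol k Ω 0 ε M u →
      ∀ A : skewAdjoint (Euc n →L[ℝ] Euc n), ∀ x ∈ ringSet Ω 0 ε,
        |fderivWithin ℝ u (ringSet Ω 0 ε) x (A.1 x)| ≤ C * ‖A.1‖ := by
  obtain ⟨r, hr₀, hr⟩ := hΩb.closure.exists_pos_norm_le
  obtain ⟨L, hL₀, hL⟩ := hψ.exists_abs_le_mul_dist hk hΩ hconv hΩb hball hM
  refine ⟨L * r + 1, by positivity, fun ε hε u hu A x hx => ?_⟩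
  have deriv_cont : ContinuousOn (fderivWithin ℝ u (ringSet Ω 0 ε)) (ringSet Ω 0 ε) :=
    hu.1.continuousOn_fderivWithin (uniqueDiffOn_closure_diff_closedBall hΩ hconv hε.1
      ((closedBall_subset_closedBall hε.2).trans hball)) one_le_two
  have angular_cont : ContinuousOn
      (fun y => |fderivWithin ℝ u (ringSet Ω 0 ε) y (A.1 y)|) (ringSet Ω 0 ε) :=
    (deriv_cont.clm_apply A.1.continuous.continuousOn).abs
  refine ContinuousWithinAt.closure_le hx ((angular_cont x hx).mono subset_closure)
    continuousWithinAt_const fun y hy => ?_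
  have ring_nhds : ringSet Ω 0 ε ∈ 𝓝 y :=
    mem_of_superset ((hΩ.sdiff isClosed_closedBall).mem_nhds hy) subset_closure
  rw [fderivWithin_of_mem_nhds ring_nhds]
  refine (hu.abs_fderiv_skewAdjoint_le hk hΩ hL₀ (hL ε hε.2 u hu) hr A hy).trans ?_
  gcongr
  exact (lt_add_one _).le

/-- uniform bound on the angular derivatives `x_i ∂_j u − x_j ∂_i u`. -/
theorem statement8 {n k : ℕ} (hk : 1 ≤ k) (hkn : k ≤ n)
    (Ω₁ : Set (Euc n)) (hΩo : IsOpen Ω₁) (hΩconv : Convex ℝ Ω₁)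
    (hΩb : IsBounded Ω₁) (hΩs : HasSmoothBoundary Ω₁)
    (ε₀ : ℝ) (hε₀ : 0 < ε₀) (hball : closedBall (0 : Euc n) ε₀ ⊆ Ω₁)
    (ψ : Euc n → ℝ) (hψ : IsSol22 k Ω₁ ψ)
    (M₁ : ℝ) (hM₁ : 0 < M₁) (hM₁ψ : ∀ x ∈ closure Ω₁, -ψ x < M₁)
    (hM₁sub : ∀ ε ∈ Ioo (0:ℝ) ε₀, ∀ x ∈ frontier Ω₁, underSol k (0 : Euc n) ε M₁ x ≤ 0)
    (M : ℝ) (hM : M₁ < M)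
 :
    ∃ C : ℝ, 0 < C ∧ ∀ ε ∈ Ioo (0:ℝ) ε₀, ∀ u : Euc n → ℝ,
      IsSol k Ω₁ (0 : Euc n) ε M u → ∀ i j : Fin n, i < j →
        ∀ x ∈ ringSet Ω₁ (0 : Euc n) ε,
          |x i * fderivWithin ℝ u (ringSet Ω₁ (0 : Euc n) ε) x
              (EuclideanSpace.single j (1:ℝ)) -
            x j * fderivWithin ℝ u (ringSet Ω₁ (0 : Euc n) ε) x
              (EuclideanSpace.single i (1:ℝ))| ≤ C := by
  obtain ⟨C, hC, bound⟩ := statement8_general hk hΩo hΩconv hΩb hball hψ (hM₁.trans hM).le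
  exact ⟨C * 2, by positivity, fun ε hε u hu i j _ x hx =>
    abs_angular_le_of_skewAdjoint hC.le (bound ε (Ioo_subset_Ioc_self hε) u hu · x hx) i j⟩
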